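/- Let v be a radial weight in the class D̂ satisfying ∫₀¹ (1-s)²/v̂(s) ds < ∞, M₁(v) = sup_{0<r<1} (∫_r¹ v̂(s)/(1-s)² ds)^{1/2} (∫₀^r 1/v̂(s) ds)^{1/2} < ∞, and M₂(v) = sup_{0<r<1} (∫₀^r v̂(s)/(1-s)⁴ ds)^{1/2} (∫_r¹ (1-s)²/v̂(s) ds)^{1/2} < ∞. Then there exists C = C(v) > 0 such that for every measurable φ : [0,1) → ℂ with ‖φ‖_{L²_{V̂₂}} < ∞, the function H̃(φ)(z) = ∫₀¹ |φ(t)|/(1-tz) dt is analytic on 𝔻 and satisfies ‖H̃(φ)‖_{D_v} ≤ C · M₁(v) · M₂(v) · ‖φ‖_{L²_{V̂₂}}. -/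

import Mathlib

open MeasureTheory Real Set Filter

noncomputable section

/-- `hatw v r = ∫_r^1 v(s) ds`. -/
def hatw (v : ℝ → ℝ) (r : ℝ) : ℝ := ∫ s in r..1, v s

/-- A radial weight: measurable, positive on `[0,1)`, integrable on `(0,1)`. -/
def RadialWeight (v : ℝ → ℝ) : Prop :=
  Measurable v ∧ (∀ r ∈ Set.Ico (0:ℝ) 1, 0 < v r) ∧
    MeasureTheory.IntegrableOn v (Set.Ioo 0 1)

/-- Membership in the class `D̂`. -/
def DoublingD (v : ℝ → ℝ) : Prop :=
  ∃ C : ℝ, 1 ≤ C ∧ ∀ r ∈ Set.Ico (0:ℝ) 1, hatw v r ≤ C * hatw v ((1+r)/2)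

/-- Squared Dirichlet-type norm `‖f‖_{D_v}^2`. -/
def DvSq (v : ℝ → ℝ) (f : ℂ → ℂ) : ENNReal :=
  (‖f 0‖₊ : ENNReal)^2 +
    (ENNReal.ofReal Real.pi)⁻¹ *
      ∫⁻ z in Metric.ball (0:ℂ) 1, (‖deriv f z‖₊ : ENNReal)^2 * ENNReal.ofReal (v ‖z‖)

/-- The Muckenhoupt type quantity `M₁(v)`. -/
def M1v (v : ℝ → ℝ) : ENNReal :=
  ⨆ r ∈ Set.Ioo (0:ℝ) 1,
    (∫⁻ s in Set.Ioo r 1, ENNReal.ofReal (hatw v s / (1-s)^2)) ^ (1/2 : ℝ) *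
    (∫⁻ s in Set.Ioo (0:ℝ) r, ENNReal.ofReal (1 / hatw v s)) ^ (1/2 : ℝ)

/-- The Muckenhoupt type quantity `M₂(v)`. -/
def M2v (v : ℝ → ℝ) : ENNReal :=
  ⨆ r ∈ Set.Ioo (0:ℝ) 1,
    (∫⁻ s in Set.Ioo (0:ℝ) r, ENNReal.ofReal (hatw v s / (1-s)^4)) ^ (1/2 : ℝ) *
    (∫⁻ s in Set.Ioo r 1, ENNReal.ofReal ((1-s)^2 / hatw v s)) ^ (1/2 : ℝ)

/-- The moment `v_x = ∫_0^1 s^x v(s) ds`. -/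
def vx (v : ℝ → ℝ) (x : ℕ) : ℝ := ∫ s in (0:ℝ)..1, s^x * v s

/-- `M_∞(s,f)`, the maximum of `|f|` on the circle of radius `s`. -/
def Minf (f : ℂ → ℂ) (s : ℝ) : ℝ := sSup ((fun z => ‖f z‖) '' Metric.sphere (0:ℂ) s)

/-- `M₂(r,h)`. -/
def M2mean (h : ℂ → ℂ) (r : ℝ) : ℝ :=
  Real.sqrt ((2*Real.pi)⁻¹ * ∫ θ in (-Real.pi)..Real.pi, ‖h ((r:ℂ) * Complex.exp (θ * Complex.I))‖^2)

/-- The norm of `B(2,∞)` (with values in `[0,∞]`). -/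
def B2infE (g : ℂ → ℂ) : ENNReal :=
  (‖g 0‖₊ : ENNReal) +
    ⨆ r ∈ Set.Ioo (0:ℝ) 1, ENNReal.ofReal (M2mean (deriv g) r * Real.sqrt (1-r))

/-- The `p`-th power of the norm of `B(2,p)` (with values in `[0,∞]`). -/
def B2pE (p : ℝ) (g : ℂ → ℂ) : ENNReal :=
  ENNReal.ofReal (‖g 0‖ ^ p) +
    ∫⁻ r in Set.Ioo (0:ℝ) 1, ENNReal.ofReal (M2mean (deriv g) r ^ p * (1-r)^(p/2-1))

/-- The generalized Hilbert operator `H_g`. -/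
def Hg (g f : ℂ → ℂ) (z : ℂ) : ℂ := ∫ t in Set.Ioo (0:ℝ) 1, f t * deriv g (t * z)

/-- The Hilbert operator `H` acting on functions on `[0,1)`. -/
def Hop (φ : ℝ → ℂ) (z : ℂ) : ℂ := ∫ t in Set.Ioo (0:ℝ) 1, φ t / (1 - t * z)

/-- The sublinear Hilbert operator `H̃`. -/
def Htil (φ : ℝ → ℂ) (z : ℂ) : ℂ := ∫ t in Set.Ioo (0:ℝ) 1, (‖φ t‖ : ℂ) / (1 - t * z)

/-- Squared norm in `L²_{V̂₂}`. -/
def L2V2sq (v : ℝ → ℝ) (φ : ℝ → ℂ) : ENNReal :=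
  ∫⁻ t in Set.Ioo (0:ℝ) 1, (‖φ t‖₊ : ENNReal)^2 * ENNReal.ofReal (hatw v t / (1-t)^2)

/-- Taylor coefficient `ĝ(k)` of `g` at the origin. -/
def gcoef (g : ℂ → ℂ) (k : ℕ) : ℂ := iteratedDeriv k g 0 / (Nat.factorial k)

/-!
Since `|1 - tz|⁻²` has `L²(dθ)`-norm at most `√(2π) (1 - tr) ^ (-3/2)` on the circle `|z| = r`,
Minkowski's inequality bounds the Dirichlet integral of `H φ` by a multiple of
`∫ v(r) (∫ |φ(t)| (1 - tr) ^ (-3/2) dt)² dr`. The kernel `(1 - tr) ^ (-3/2)` is at most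
`(1 - t) ^ (-3/2)` for `t < r` and at most `(1 - r) ^ (-3/2)` for `t > r`, which leaves two weighted
Hardy inequalities. The Muckenhoupt condition of the first follows from `M₁(v) < ∞` and the doubling
of `v̂`, that of the second from `M₂(v) < ∞` after an integration by parts. As `M₁(v) M₂(v) > 0`
and the constant may depend on `v`, any finite bound is a multiple of `M₁(v) M₂(v)`.

The Hardy inequality itself is Schur's test with powers of `B(r) = ν (Iic r)` and
`A(r) = μ (Ici r)`: Cauchy-Schwarz with the weight `B ^ (1/2)` costs
`∫ B ^ (-1/2) dν ≤ 2 B ^ (1/2)`, and `A B ≤ K` trades the factor `B ^ (1/2)` for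
`K ^ (1/2) A ^ (-1/2)`, which is integrated in the same way after exchanging the integrals.
-/

section Lintegral

open scoped ENNReal

variable {α β : Type*} [MeasurableSpace α] [MeasurableSpace β] {μ : Measure α} {ν : Measure β}

lemma sq_lintegral_le_mul_of_sq_le_mul {f a b : α → ℝ≥0∞} (ha : AEMeasurable a μ)
    (hb : AEMeasurable b μ) (h : ∀ᵐ x ∂μ, f x ^ 2 ≤ a x * b x) :
    (∫⁻ x, f x ∂μ) ^ 2 ≤ (∫⁻ x, a x ∂μ) * ∫⁻ x, b x ∂μ := by
  have hf : ∀ᵐ x ∂μ, f x ≤ a x ^ (1 / 2 : ℝ) * b x ^ (1 / 2 : ℝ) := by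
    filter_upwards [h] with x hx
    rw [← ENNReal.mul_rpow_of_nonneg _ _ (by norm_num), one_div, ENNReal.le_rpow_inv_iff two_pos]
    exact_mod_cast hx
  calc (∫⁻ x, f x ∂μ) ^ 2
      ≤ ((∫⁻ x, a x ∂μ) ^ (1 / 2 : ℝ) * (∫⁻ x, b x ∂μ) ^ (1 / 2 : ℝ)) ^ 2 := by
        gcongr
        exact (lintegral_mono_ae hf).trans <| ENNReal.lintegral_mul_norm_pow_le ha hb
          (by norm_num) (by norm_num) (by norm_num)
    _ = (∫⁻ x, a x ∂μ) * ∫⁻ x, b x ∂μ := by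
        rw [mul_pow, ← ENNReal.rpow_mul_natCast, ← ENNReal.rpow_mul_natCast]
        norm_num

lemma lintegral_sq_lintegral_le_sq_lintegral [SFinite μ] [SFinite ν] {f : α → β → ℝ≥0∞}
    (hf : Measurable (Function.uncurry f)) :
    ∫⁻ y, (∫⁻ x, f x y ∂μ) ^ 2 ∂ν ≤ (∫⁻ x, (∫⁻ y, f x y ^ 2 ∂ν) ^ (1 / 2 : ℝ) ∂μ) ^ 2 := by
  have hn : Measurable fun x => (∫⁻ y, f x y ^ 2 ∂ν) ^ (1 / 2 : ℝ) :=
    (hf.pow_const 2).lintegral_prod_right.pow_const _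
  calc ∫⁻ y, (∫⁻ x, f x y ∂μ) ^ 2 ∂ν
      = ∫⁻ y, ∫⁻ p, f p.1 y * f p.2 y ∂μ.prod μ ∂ν := by
        refine lintegral_congr fun y => ?_
        rw [sq, ← lintegral_prod_mul] <;> exact hf.of_uncurry_right.aemeasurable
    _ = ∫⁻ p, ∫⁻ y, f p.1 y * f p.2 y ∂ν ∂μ.prod μ :=
        lintegral_lintegral_swap (by fun_prop)
    _ ≤ ∫⁻ p, (∫⁻ y, f p.1 y ^ 2 ∂ν) ^ (1 / 2 : ℝ) * (∫⁻ y, f p.2 y ^ 2 ∂ν) ^ (1 / 2 : ℝ)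
          ∂μ.prod μ := by
        refine lintegral_mono fun p => ?_
        simpa using ENNReal.lintegral_mul_le_Lp_mul_Lq ν HolderConjugate.two_two
          (f := f p.1) (g := f p.2) (by fun_prop) (by fun_prop)
    _ = (∫⁻ x, (∫⁻ y, f x y ^ 2 ∂ν) ^ (1 / 2 : ℝ) ∂μ) ^ 2 := by
        rw [sq, lintegral_prod_mul hn.aemeasurable hn.aemeasurable]

lemma lintegral_Ioi_min_sq_rpow_neg_two {s : ℝ} (hs : 0 < s) :
    ∫⁻ l in Ioi (0 : ℝ), min (ENNReal.ofReal (s ^ 2)) (ENNReal.ofReal (l ^ (-2 : ℝ))) ≤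
      ENNReal.ofReal (2 * s) := by
  rw [← Ioc_union_Ioi_eq_Ioi (inv_pos.2 hs).le]
  have htail : -s⁻¹ ^ (-2 + 1 : ℝ) / (-2 + 1) = s := by norm_num [rpow_neg_one]
  calc _ ≤ (∫⁻ _ in Ioc 0 s⁻¹, ENNReal.ofReal (s ^ 2)) +
          ∫⁻ l in Ioi s⁻¹, ENNReal.ofReal (l ^ (-2 : ℝ)) :=
        (lintegral_union_le _ _ _).trans <|
          add_le_add (lintegral_mono fun _ => min_le_left _ _)
            (lintegral_mono fun _ => min_le_right _ _)
    _ = ENNReal.ofReal (2 * s) := by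
        rw [← ofReal_integral_eq_lintegral_ofReal
          (integrableOn_Ioi_rpow_of_lt (by norm_num) (inv_pos.2 hs)),
          integral_Ioi_rpow_of_lt (by norm_num) (inv_pos.2 hs), htail, setLIntegral_const,
          Real.volume_Ioc, sub_zero, ← ENNReal.ofReal_mul (by positivity),
          ← ENNReal.ofReal_add (by positivity) hs.le]
        · congr 1
          field_simp
          norm_num
        · filter_upwards [ae_restrict_mem measurableSet_Ioi] with l hl
          exact rpow_nonneg ((inv_pos.2 hs).trans hl).le _

end Lintegral

section Hardy

open scoped ENNReal

variable {α : Type*} [LinearOrder α] [TopologicalSpace α] [OrderTopology α]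
  [MeasurableSpace α] {μ ν : Measure α}

lemma measure_setOf_measure_Iic_le [SecondCountableTopology α] (ν : Measure α) (c : ℝ≥0∞) :
    ν {t | ν (Iic t) ≤ c} ≤ c := by
  -- A lower set without greatest element is a countable increasing union of its sets `Iic t`.
  by_cases hmax : ∃ m, IsGreatest {t | ν (Iic t) ≤ c} m
  · obtain ⟨m, hm, hub⟩ := hmax
    exact (measure_mono hub).trans hm
  · obtain ⟨T, hTS, hT, hcover⟩ :=
      TopologicalSpace.isOpen_biUnion_countable {t | ν (Iic t) ≤ c} Iio
        fun _ _ => isOpen_Iio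
    have hsub : {t | ν (Iic t) ≤ c} ⊆ ⋃ t ∈ T, Iic t := by
      intro s hs
      obtain ⟨t, ht, hst⟩ : ∃ t, ν (Iic t) ≤ c ∧ s < t := by
        by_contra! h
        exact hmax ⟨s, hs, h⟩
      have : s ∈ ⋃ t ∈ T, Iio t := hcover ▸ mem_biUnion ht hst
      exact biUnion_mono subset_rfl (fun t _ => Iio_subset_Iic_self) this
    refine (measure_mono hsub).trans ?_
    rw [measure_biUnion_eq_iSup hT (fun a ha b hb => ?_)]
    · exact iSup₂_le fun t ht => hTS ht
    · obtain h | h := le_total a b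
      exacts [⟨b, hb, Iic_subset_Iic.2 h, subset_rfl⟩, ⟨a, ha, subset_rfl, Iic_subset_Iic.2 h⟩]

lemma measure_setOf_lt_toReal_measure_Iic_rpow_le [SecondCountableTopology α] (ν : Measure α)
    {l : ℝ} (hl : 0 < l) :
    ν {t | l < (ν (Iic t) ^ (-(1 / 2) : ℝ)).toReal} ≤ ENNReal.ofReal (l ^ (-2 : ℝ)) := by
  refine (measure_mono fun t ht => ?_).trans (measure_setOf_measure_Iic_le ν _)
  have hle : ENNReal.ofReal l ≤ ν (Iic t) ^ (-(1 / 2) : ℝ) :=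
    ENNReal.ofReal_le_of_le_toReal (le_of_lt ht)
  rw [mem_ofPred_eq, ← ENNReal.ofReal_rpow_of_pos hl, ← ENNReal.inv_le_inv, ENNReal.rpow_neg,
    inv_inv]
  refine (ENNReal.rpow_le_rpow hle zero_le_two).trans_eq ?_
  rw [← ENNReal.rpow_mul, ← ENNReal.rpow_neg_one]
  norm_num

lemma ae_measure_Iic_ne_zero [SecondCountableTopology α] (ν : Measure α) :
    ∀ᵐ t ∂ν, ν (Iic t) ≠ 0 := by
  simpa [ae_iff] using measure_setOf_measure_Iic_le ν 0

lemma ae_measure_Ici_ne_zero [SecondCountableTopology α] (μ : Measure α) :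
    ∀ᵐ t ∂μ, μ (Ici t) ≠ 0 :=
  ae_measure_Iic_ne_zero (α := αᵒᵈ) μ

lemma measurable_measure_Iic [BorelSpace α] (ν : Measure α) : Measurable fun t => ν (Iic t) :=
  Monotone.measurable fun _ _ h => measure_mono (Iic_subset_Iic.2 h)

variable [SecondCountableTopology α] [BorelSpace α]

-- With `B t = ν (Iic t)` this is `∫ B ^ (-1/2) dB ≤ 2 B ^ (1/2)`. Since `ν` may have atoms there is
-- no substitution rule; the layer cake formula replaces it.
lemma setLIntegral_Iic_measure_Iic_rpow_le (ν : Measure α) (r : α) :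
    ∫⁻ t in Iic r, ν (Iic t) ^ (-(1 / 2) : ℝ) ∂ν ≤ 2 * ν (Iic r) ^ (1 / 2 : ℝ) := by
  obtain hr | hr := eq_or_ne (ν (Iic r)) ∞
  · simp [hr]
  obtain hr₀ | hr₀ := eq_or_ne (ν (Iic r)) 0
  · simp [Measure.restrict_eq_zero.2 hr₀]
  have hB : Measurable fun t => ν (Iic t) ^ (-(1 / 2) : ℝ) :=
    (measurable_measure_Iic ν).pow_const _
  have hs : 0 < √(ν (Iic r)).toReal := sqrt_pos.2 (ENNReal.toReal_pos hr₀ hr)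
  calc ∫⁻ t in Iic r, ν (Iic t) ^ (-(1 / 2) : ℝ) ∂ν
      = ∫⁻ t in Iic r, ENNReal.ofReal (ν (Iic t) ^ (-(1 / 2) : ℝ)).toReal ∂ν := by
        refine lintegral_congr_ae (ae_restrict_of_ae ?_)
        filter_upwards [ae_measure_Iic_ne_zero ν] with t ht
        rw [ENNReal.ofReal_toReal]
        simp [ht]
    _ = ∫⁻ l in Ioi (0 : ℝ),
          ν.restrict (Iic r) {t | l < (ν (Iic t) ^ (-(1 / 2) : ℝ)).toReal} :=
        lintegral_eq_lintegral_meas_lt _ (by simp [EventuallyLE])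
          hB.ennreal_toReal.aemeasurable
    _ ≤ ∫⁻ l in Ioi (0 : ℝ), min (ENNReal.ofReal (√(ν (Iic r)).toReal ^ 2))
          (ENNReal.ofReal (l ^ (-2 : ℝ))) := by
        refine setLIntegral_mono' measurableSet_Ioi fun l hl => le_min ?_ ?_
        · rw [sq_sqrt ENNReal.toReal_nonneg, ENNReal.ofReal_toReal hr]
          exact (measure_mono (subset_univ _)).trans (by simp)
        · exact (Measure.restrict_apply_le _ _).trans
            (measure_setOf_lt_toReal_measure_Iic_rpow_le ν hl)
    _ ≤ ENNReal.ofReal (2 * √(ν (Iic r)).toReal) := lintegral_Ioi_min_sq_rpow_neg_two hs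
    _ = 2 * ν (Iic r) ^ (1 / 2 : ℝ) := by
        rw [ENNReal.ofReal_mul zero_le_two, sqrt_eq_rpow,
          ← ENNReal.ofReal_rpow_of_nonneg ENNReal.toReal_nonneg (by norm_num),
          ENNReal.ofReal_toReal hr]
        simp

lemma setLIntegral_Ici_measure_Ici_rpow_le (μ : Measure α) (r : α) :
    ∫⁻ t in Ici r, μ (Ici t) ^ (-(1 / 2) : ℝ) ∂μ ≤ 2 * μ (Ici r) ^ (1 / 2 : ℝ) :=
  setLIntegral_Iic_measure_Iic_rpow_le (α := αᵒᵈ) μ r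

lemma lintegral_mul_setLIntegral_Iic [SFinite μ] [SFinite ν] {f g : α → ℝ≥0∞}
    (hf : Measurable f) (hg : Measurable g) :
    ∫⁻ x, f x * ∫⁻ y in Iic x, g y ∂ν ∂μ = ∫⁻ y, g y * ∫⁻ x in Ici y, f x ∂μ ∂ν := by
  have hmeas : Measurable fun p : α × α => {p : α × α | p.2 ≤ p.1}.indicator
      (fun p => f p.1 * g p.2) p :=
    Measurable.indicator (by fun_prop) (measurableSet_le measurable_snd measurable_fst)
  calc ∫⁻ x, f x * ∫⁻ y in Iic x, g y ∂ν ∂μ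
      = ∫⁻ x, ∫⁻ y, {p : α × α | p.2 ≤ p.1}.indicator (fun p => f p.1 * g p.2) (x, y) ∂ν ∂μ := by
        refine lintegral_congr fun x => ?_
        rw [← lintegral_const_mul _ hg, ← lintegral_indicator measurableSet_Iic]
        rfl
    _ = ∫⁻ y, ∫⁻ x, {p : α × α | p.2 ≤ p.1}.indicator (fun p => f p.1 * g p.2) (x, y) ∂μ ∂ν :=
        lintegral_lintegral_swap hmeas.aemeasurable
    _ = ∫⁻ y, g y * ∫⁻ x in Ici y, f x ∂μ ∂ν := by
        refine lintegral_congr fun y => ?_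
        rw [← lintegral_const_mul _ hf, ← lintegral_indicator measurableSet_Ici]
        refine lintegral_congr fun x => ?_
        simp only [indicator, mem_ofPred_eq, mem_Ici, mul_comm]

lemma rpow_half_mul_rpow_half_le {a b K : ℝ≥0∞} (h : a * b ≤ K) :
    a ^ (1 / 2 : ℝ) * b ^ (1 / 2 : ℝ) ≤ K ^ (1 / 2 : ℝ) := by
  rw [← ENNReal.mul_rpow_of_nonneg _ _ (by norm_num)]
  gcongr

lemma sq_setLIntegral_Iic_le {g : α → ℝ≥0∞} (hg : Measurable g) {r : α} (hr : ν (Iic r) ≠ ∞) :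
    (∫⁻ t in Iic r, g t ∂ν) ^ 2 ≤
      2 * ν (Iic r) ^ (1 / 2 : ℝ) * ∫⁻ t in Iic r, g t ^ 2 * ν (Iic t) ^ (1 / 2 : ℝ) ∂ν := by
  have hB (p : ℝ) : Measurable fun t => ν (Iic t) ^ p := (measurable_measure_Iic ν).pow_const p
  refine (sq_lintegral_le_mul_of_sq_le_mul (hB _).aemeasurable (by fun_prop) ?_).trans
    (mul_le_mul_left (setLIntegral_Iic_measure_Iic_rpow_le ν r) _)
  filter_upwards [ae_restrict_of_ae (ae_measure_Iic_ne_zero ν), ae_restrict_mem measurableSet_Iic]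
    with t ht htr
  have htop : ν (Iic t) ≠ ∞ := measure_ne_top_of_subset (Iic_subset_Iic.2 htr) hr
  rw [mul_left_comm, ← ENNReal.rpow_add _ _ ht htop]
  simp

theorem lintegral_sq_setLIntegral_Iic_le [SFinite μ] [SFinite ν] {K : ℝ≥0∞} (hK : K ≠ ∞)
    (hμ : ∀ᵐ r ∂μ, μ (Ici r) * ν (Iic r) ≤ K) (hν : ∀ᵐ r ∂ν, μ (Ici r) * ν (Iic r) ≤ K)
    {g : α → ℝ≥0∞} (hg : Measurable g) :
    ∫⁻ r, (∫⁻ t in Iic r, g t ∂ν) ^ 2 ∂μ ≤ 4 * K * ∫⁻ t, g t ^ 2 ∂ν := by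
  have hA (p : ℝ) : Measurable fun r => μ (Ici r) ^ p :=
    (measurable_measure_Iic (α := αᵒᵈ) μ).pow_const p
  have hB (p : ℝ) : Measurable fun t => ν (Iic t) ^ p := (measurable_measure_Iic ν).pow_const p
  have hK' : K ^ (1 / 2 : ℝ) ≠ ∞ := ENNReal.rpow_ne_top_of_nonneg (by norm_num) hK
  calc ∫⁻ r, (∫⁻ t in Iic r, g t ∂ν) ^ 2 ∂μ
      ≤ ∫⁻ r, 2 * K ^ (1 / 2 : ℝ) * (μ (Ici r) ^ (-(1 / 2) : ℝ) *
          ∫⁻ t in Iic r, g t ^ 2 * ν (Iic t) ^ (1 / 2 : ℝ) ∂ν) ∂μ := by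
        refine lintegral_mono_ae ?_
        filter_upwards [hμ, ae_measure_Ici_ne_zero μ] with r hr hr₀
        have hfin : ν (Iic r) ≠ ∞ := fun h => hK <| top_unique <| by simpa [h, hr₀] using hr
        refine (sq_setLIntegral_Iic_le hg hfin).trans ?_
        rw [← mul_assoc, mul_assoc 2 (K ^ _)]
        gcongr
        rw [ENNReal.rpow_neg, ← div_eq_mul_inv,
          ENNReal.le_div_iff_mul_le (by simp [hr₀]) (.inr hK')]
        exact rpow_half_mul_rpow_half_le ((mul_comm _ _).trans_le hr)
    _ = 2 * K ^ (1 / 2 : ℝ) * ∫⁻ t, g t ^ 2 * ν (Iic t) ^ (1 / 2 : ℝ) *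
          ∫⁻ r in Ici t, μ (Ici r) ^ (-(1 / 2) : ℝ) ∂μ ∂ν := by
        rw [lintegral_const_mul' _ _ (by finiteness),
          lintegral_mul_setLIntegral_Iic (by fun_prop) (by fun_prop)]
    _ ≤ 2 * K ^ (1 / 2 : ℝ) * ∫⁻ t, 2 * K ^ (1 / 2 : ℝ) * g t ^ 2 ∂ν := by
        gcongr 2 * K ^ (1 / 2 : ℝ) * ?_
        refine lintegral_mono_ae ?_
        filter_upwards [hν] with t ht
        calc _ ≤ g t ^ 2 * ν (Iic t) ^ (1 / 2 : ℝ) * (2 * μ (Ici t) ^ (1 / 2 : ℝ)) := by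
              gcongr
              exact setLIntegral_Ici_measure_Ici_rpow_le μ t
          _ = 2 * (μ (Ici t) ^ (1 / 2 : ℝ) * ν (Iic t) ^ (1 / 2 : ℝ)) * g t ^ 2 := by ring
          _ ≤ _ := by gcongr; exact rpow_half_mul_rpow_half_le ht
    _ = 4 * K * ∫⁻ t, g t ^ 2 ∂ν := by
        rw [lintegral_const_mul' _ _ (by finiteness)]
        have hKK : K ^ (1 / 2 : ℝ) * K ^ (1 / 2 : ℝ) = K := by
          rw [← ENNReal.rpow_add_of_nonneg _ _ (by norm_num) (by norm_num)]
          norm_num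
        nth_rw 3 [← hKK]
        ring

theorem lintegral_mul_sq_setLIntegral_Iic_le [SFinite μ] {K : ℝ≥0∞} (hK : K ≠ ∞)
    {u w : α → ℝ≥0∞} (hu : Measurable u) (hw : Measurable w) (hu₀ : ∀ᵐ t ∂μ, u t ≠ 0)
    (hu' : ∀ᵐ t ∂μ, u t ≠ ∞)
    (h : ∀ᵐ r ∂μ, (∫⁻ s in Ici r, w s ∂μ) * ∫⁻ s in Iic r, (u s)⁻¹ ∂μ ≤ K)
    {g : α → ℝ≥0∞} (hg : Measurable g) :
    ∫⁻ r, w r * (∫⁻ t in Iic r, g t ∂μ) ^ 2 ∂μ ≤ 4 * K * ∫⁻ t, u t * g t ^ 2 ∂μ := by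
  have hK' : ∀ᵐ r ∂μ, μ.withDensity w (Ici r) * μ.withDensity u⁻¹ (Iic r) ≤ K := by
    simpa [withDensity_apply] using h
  have hardy := lintegral_sq_setLIntegral_Iic_le hK
    ((withDensity_absolutelyContinuous _ _).ae_le hK')
    ((withDensity_absolutelyContinuous _ _).ae_le hK') (hu.mul hg)
  have hcancel : ∀ᵐ t ∂μ, (u t)⁻¹ * (u t * g t) = g t := by
    filter_upwards [hu₀, hu'] with t h₀ h'
    rw [← mul_assoc, ENNReal.inv_mul_cancel h₀ h', one_mul]
  have hinner (r : α) : ∫⁻ t in Iic r, (u * g) t ∂μ.withDensity u⁻¹ = ∫⁻ t in Iic r, g t ∂μ := by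
    rw [restrict_withDensity measurableSet_Iic,
      lintegral_withDensity_eq_lintegral_mul _ hu.inv (hu.mul hg)]
    exact lintegral_congr_ae (ae_restrict_of_ae hcancel)
  have houter : ∫⁻ t, (u * g) t ^ 2 ∂μ.withDensity u⁻¹ = ∫⁻ t, u t * g t ^ 2 ∂μ := by
    rw [lintegral_withDensity_eq_lintegral_mul _ hu.inv ((hu.mul hg).pow_const 2)]
    refine lintegral_congr_ae (hcancel.mono fun t ht => ?_)
    simp only [Pi.mul_apply, Pi.inv_apply]
    rw [sq (_ * _), ← mul_assoc, ht]
    ring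
  have hmeas : Measurable fun r => (∫⁻ t in Iic r, g t ∂μ) ^ 2 :=
    (Monotone.measurable fun _ _ hrs => lintegral_mono_set (Iic_subset_Iic.2 hrs)).pow_const 2
  simp only [hinner, houter] at hardy
  rwa [lintegral_withDensity_eq_lintegral_mul _ hw hmeas] at hardy

theorem lintegral_mul_sq_setLIntegral_Ici_le [SFinite μ] {K : ℝ≥0∞} (hK : K ≠ ∞)
    {u w : α → ℝ≥0∞} (hu : Measurable u) (hw : Measurable w) (hu₀ : ∀ᵐ t ∂μ, u t ≠ 0)
    (hu' : ∀ᵐ t ∂μ, u t ≠ ∞)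
    (h : ∀ᵐ r ∂μ, (∫⁻ s in Iic r, w s ∂μ) * ∫⁻ s in Ici r, (u s)⁻¹ ∂μ ≤ K)
    {g : α → ℝ≥0∞} (hg : Measurable g) :
    ∫⁻ r, w r * (∫⁻ t in Ici r, g t ∂μ) ^ 2 ∂μ ≤ 4 * K * ∫⁻ t, u t * g t ^ 2 ∂μ :=
  have : SFinite (α := αᵒᵈ) μ := ‹SFinite μ›
  lintegral_mul_sq_setLIntegral_Iic_le (α := αᵒᵈ) hK hu hw hu₀ hu' h hg

end Hardy

section Circle

open scoped ENNReal

-- On the unit circle `|1 - a z| = |z - conj a|`: the integrand is a multiple of the Poisson kernel.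
lemma circleAverage_inv_sq_norm_one_sub_mul {a : ℂ} (ha : ‖a‖ < 1) :
    circleAverage (fun z => (‖1 - a * z‖ ^ 2)⁻¹) 0 1 = (1 - ‖a‖ ^ 2)⁻¹ := by
  have hpoisson := InnerProductSpace.HarmonicContOnCl.circleAverage_poissonKernel_smul (c := 0)
    (R := 1) (w := starRingEnd ℂ a) (f := fun _ => (1 - ‖a‖ ^ 2)⁻¹)
    InnerProductSpace.harmonicContOnCl_const (by simpa using ha)
  rw [← hpoisson]
  refine circleAverage_congr_sphere fun z hz => ?_
  have hz : ‖z‖ = 1 := by simpa using hz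
  have hnorm : ‖z - starRingEnd ℂ a‖ = ‖1 - a * z‖ := by
    calc ‖z - starRingEnd ℂ a‖ = ‖starRingEnd ℂ z * (z - starRingEnd ℂ a)‖ := by simp [hz]
      _ = ‖starRingEnd ℂ (1 - a * z)‖ := by
        rw [mul_sub, Complex.conj_mul', hz]
        simp [mul_comm]
      _ = ‖1 - a * z‖ := RCLike.norm_conj _
  have hpos : 0 < 1 - ‖a‖ ^ 2 := by nlinarith [norm_nonneg a]
  simp only [poissonKernel_def, Pi.smul_apply', sub_zero, hz, RCLike.norm_conj, hnorm, smul_eq_mul]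
  field_simp

lemma ofReal_one_sub_norm_le_enorm_one_sub (w : ℂ) : ENNReal.ofReal (1 - ‖w‖) ≤ ‖1 - w‖ₑ := by
  rw [← ofReal_norm]
  gcongr
  simpa using norm_sub_norm_le 1 w

lemma setLIntegral_inv_sq_enorm_one_sub_mul_circleMap {a : ℂ} (ha : ‖a‖ < 1) :
    ∫⁻ θ in Ioo (-π) π, (‖1 - a * circleMap 0 1 θ‖ₑ ^ 2)⁻¹ =
      ENNReal.ofReal (2 * π * (1 - ‖a‖ ^ 2)⁻¹) := by
  have hpos (θ : ℝ) : 0 < ‖1 - a * circleMap 0 1 θ‖ := by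
    have := norm_sub_norm_le 1 (a * circleMap 0 1 θ)
    rw [norm_one, norm_mul, norm_circleMap_zero, abs_one, mul_one] at this
    linarith
  have hcont : Continuous fun θ => (‖1 - a * circleMap 0 1 θ‖ ^ 2)⁻¹ :=
    Continuous.inv₀ (by fun_prop) fun θ => (pow_pos (hpos θ) 2).ne'
  have havg := circleAverage_inv_sq_norm_one_sub_mul ha
  rw [circleAverage_eq_integral_add (-π), smul_eq_mul, inv_mul_eq_iff_eq_mul₀ (by positivity),
    intervalIntegral.integral_comp_add_right (fun θ => (‖1 - a * circleMap 0 1 θ‖ ^ 2)⁻¹),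
    show 0 + -π = -π by ring, show 2 * π + -π = π by ring,
    intervalIntegral.integral_of_le (by linarith [pi_pos]), integral_Ioc_eq_integral_Ioo] at havg
  rw [← havg, ofReal_integral_eq_lintegral_ofReal
    (hcont.integrableOn_Icc.mono_set Ioo_subset_Icc_self) (ae_of_all _ fun θ => by positivity)]
  refine lintegral_congr fun θ => ?_
  rw [← ofReal_norm, ← ENNReal.ofReal_pow (norm_nonneg _),
    ENNReal.ofReal_inv_of_pos (pow_pos (hpos θ) 2)]

lemma setLIntegral_inv_pow_four_enorm_one_sub_mul_circleMap_le {a : ℂ} (ha : ‖a‖ < 1) :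
    ∫⁻ θ in Ioo (-π) π, (‖1 - a * circleMap 0 1 θ‖ₑ ^ 4)⁻¹ ≤
      ENNReal.ofReal (2 * π) * (ENNReal.ofReal (1 - ‖a‖) ^ 3)⁻¹ := by
  have hpos : 0 < 1 - ‖a‖ := sub_pos.2 ha
  calc ∫⁻ θ in Ioo (-π) π, (‖1 - a * circleMap 0 1 θ‖ₑ ^ 4)⁻¹
      ≤ ∫⁻ θ in Ioo (-π) π,
          (ENNReal.ofReal (1 - ‖a‖) ^ 2)⁻¹ * (‖1 - a * circleMap 0 1 θ‖ₑ ^ 2)⁻¹ := by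
        refine lintegral_mono fun θ => ?_
        rw [← ENNReal.mul_inv (by simp) (by simp), ENNReal.inv_le_inv,
          show 4 = 2 + 2 from rfl, pow_add]
        gcongr
        simpa using ofReal_one_sub_norm_le_enorm_one_sub (a * circleMap 0 1 θ)
    _ = (ENNReal.ofReal (1 - ‖a‖) ^ 2)⁻¹ * ENNReal.ofReal (2 * π * (1 - ‖a‖ ^ 2)⁻¹) := by
        rw [lintegral_const_mul' _ _ (by simp [ha]),
          setLIntegral_inv_sq_enorm_one_sub_mul_circleMap ha]
    _ ≤ (ENNReal.ofReal (1 - ‖a‖) ^ 2)⁻¹ * ENNReal.ofReal (2 * π * (1 - ‖a‖)⁻¹) := by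
        gcongr
        nlinarith [norm_nonneg a]
    _ = ENNReal.ofReal (2 * π) * (ENNReal.ofReal (1 - ‖a‖) ^ 3)⁻¹ := by
        rw [← ENNReal.ofReal_pow hpos.le, ← ENNReal.ofReal_pow hpos.le,
          ← ENNReal.ofReal_inv_of_pos (by positivity), ← ENNReal.ofReal_inv_of_pos (by positivity),
          ← ENNReal.ofReal_mul (by positivity), ← ENNReal.ofReal_mul (by positivity)]
        congr 1
        field_simp

lemma setLIntegral_ball_zero_eq_polar {G : ℂ → ℝ≥0∞} (hG : Measurable G) (R : ℝ) :
    ∫⁻ z in Metric.ball 0 R, G z =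
      ∫⁻ r in Ioo 0 R, ∫⁻ θ in Ioo (-π) π, ENNReal.ofReal r * G (circleMap 0 r θ) := by
  have hmeas : Measurable fun p : ℝ × ℝ => ENNReal.ofReal p.1 * G (circleMap 0 p.1 p.2) := by
    simp only [circleMap_zero]
    fun_prop
  rw [← lintegral_indicator Metric.isOpen_ball.measurableSet,
    ← Complex.lintegral_comp_polarCoord_symm,
    ← setLIntegral_prod _ hmeas.aemeasurable, ← Measure.volume_eq_prod,
    ← lintegral_indicator (measurableSet_Ioo.prod measurableSet_Ioo),
    ← lintegral_indicator polarCoord.open_target.measurableSet]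
  refine lintegral_congr fun p => ?_
  have hsymm : Complex.polarCoord.symm p = circleMap 0 p.1 p.2 := by
    rw [Complex.polarCoord_symm_apply, circleMap_zero, Complex.exp_mul_I]
    push_cast
    rfl
  by_cases hp : 0 < p.1
  · by_cases hR : p.1 < R <;> by_cases hθ : p.2 ∈ Ioo (-π) π <;>
      simp [indicator, hsymm, abs_of_pos hp, polarCoord_target, hp, hR, hθ]
  · simp [indicator, polarCoord_target, hp]

end Circle

lemma measurable_hatw {v : ℝ → ℝ} (hv : Measurable v) : Measurable (hatw v) := by
  have h {S : Set (ℝ × ℝ)} (hS : MeasurableSet S) :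
      Measurable fun r => ∫ s, S.indicator (fun x => v x.2) (r, s) :=
    ((hv.comp measurable_snd).indicator hS).stronglyMeasurable.integral_prod_right'.measurable
  have hpos : MeasurableSet {x : ℝ × ℝ | x.1 < x.2 ∧ x.2 ≤ 1} :=
    (measurableSet_lt measurable_fst measurable_snd).inter (measurable_snd measurableSet_Iic)
  have hneg : MeasurableSet {x : ℝ × ℝ | 1 < x.2 ∧ x.2 ≤ x.1} :=
    (measurable_snd measurableSet_Ioi).inter (measurableSet_le measurable_snd measurable_fst)
  convert (h hpos).sub (h hneg) using 1
  ext r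
  simp only [hatw, intervalIntegral, ← integral_indicator measurableSet_Ioc]
  rfl

namespace RadialWeight

variable {v : ℝ → ℝ} {r : ℝ}

lemma lintegral_eq_hatw (hv : RadialWeight v) (hr : r ∈ Ico 0 1) :
    ∫⁻ s in Ioo r 1, ENNReal.ofReal (v s) = ENNReal.ofReal (hatw v r) := by
  rw [hatw, intervalIntegral.integral_of_le hr.2.le, integral_Ioc_eq_integral_Ioo,
    ofReal_integral_eq_lintegral_ofReal (hv.2.2.mono_set (Ioo_subset_Ioo_left hr.1))]
  filter_upwards [ae_restrict_mem measurableSet_Ioo] with s hs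
  exact (hv.2.1 s ⟨hr.1.trans hs.1.le, hs.2⟩).le

lemma hatw_pos (hv : RadialWeight v) (hr : r ∈ Ico 0 1) : 0 < hatw v r := by
  refine intervalIntegral.intervalIntegral_pos_of_pos_on ?_
    (fun s hs => hv.2.1 s ⟨hr.1.trans hs.1.le, hs.2⟩) hr.2
  rw [intervalIntegrable_iff_integrableOn_Ioo_of_le hr.2.le]
  exact hv.2.2.mono_set (Ioo_subset_Ioo_left hr.1)

lemma antitoneOn_hatw (hv : RadialWeight v) : AntitoneOn (hatw v) (Ico 0 1) := by
  intro a ha b hb hab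
  rw [← ENNReal.ofReal_le_ofReal_iff (hv.hatw_pos ha).le, ← hv.lintegral_eq_hatw ha,
    ← hv.lintegral_eq_hatw hb]
  exact lintegral_mono_set (Ioo_subset_Ioo_left hab)

end RadialWeight

section Interval

open scoped ENNReal

variable {a b r : ℝ}

lemma restrict_Ioo_restrict_Iic (hr : r ∈ Ioo a b) :
    (volume.restrict (Ioo a b)).restrict (Iic r) = volume.restrict (Ioo a r) := by
  rw [Measure.restrict_restrict measurableSet_Iic, Measure.restrict_congr_set Ioo_ae_eq_Ioc]
  congr 1
  grind

lemma restrict_Ioo_restrict_Ici (hr : r ∈ Ioo a b) :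
    (volume.restrict (Ioo a b)).restrict (Ici r) = volume.restrict (Ioo r b) := by
  rw [Measure.restrict_restrict measurableSet_Ici, Measure.restrict_congr_set Ioo_ae_eq_Ico]
  congr 1
  grind

lemma setLIntegral_Ioo_mul_setLIntegral_Ioo {f g : ℝ → ℝ≥0∞} (hf : Measurable f)
    (hg : Measurable g) :
    ∫⁻ x in Ioo a b, f x * ∫⁻ y in Ioo a x, g y = ∫⁻ y in Ioo a b, g y * ∫⁻ x in Ioo y b, f x :=
  calc ∫⁻ x in Ioo a b, f x * ∫⁻ y in Ioo a x, g y
      = ∫⁻ x in Ioo a b, f x * ∫⁻ y in Iic x, g y ∂volume.restrict (Ioo a b) :=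
        setLIntegral_congr_fun measurableSet_Ioo fun x hx => by
          rw [restrict_Ioo_restrict_Iic hx]
    _ = ∫⁻ y in Ioo a b, g y * ∫⁻ x in Ici y, f x ∂volume.restrict (Ioo a b) :=
        lintegral_mul_setLIntegral_Iic hf hg
    _ = ∫⁻ y in Ioo a b, g y * ∫⁻ x in Ioo y b, f x :=
        setLIntegral_congr_fun measurableSet_Ioo fun y hy => by
          rw [restrict_Ioo_restrict_Ici hy]

variable {K : ℝ≥0∞} {u w g : ℝ → ℝ≥0∞}

theorem setLIntegral_Ioo_mul_sq_setLIntegral_Ioo_left_le (hK : K ≠ ∞) (hu : Measurable u)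
    (hw : Measurable w) (hg : Measurable g) (hu₀ : ∀ t ∈ Ioo a b, u t ≠ 0)
    (hu' : ∀ t ∈ Ioo a b, u t ≠ ∞)
    (h : ∀ r ∈ Ioo a b, (∫⁻ s in Ioo r b, w s) * ∫⁻ s in Ioo a r, (u s)⁻¹ ≤ K) :
    ∫⁻ r in Ioo a b, w r * (∫⁻ t in Ioo a r, g t) ^ 2 ≤ 4 * K * ∫⁻ t in Ioo a b, u t * g t ^ 2 := by
  have hae {p : ℝ → Prop} (hp : ∀ t ∈ Ioo a b, p t) : ∀ᵐ t ∂volume.restrict (Ioo a b), p t :=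
    (ae_restrict_mem measurableSet_Ioo).mono hp
  refine le_of_eq_of_le (setLIntegral_congr_fun measurableSet_Ioo fun r hr => ?_)
    (lintegral_mul_sq_setLIntegral_Iic_le hK hu hw (hae hu₀) (hae hu') (hae fun r hr => ?_) hg)
  · rw [restrict_Ioo_restrict_Iic hr]
  · rw [restrict_Ioo_restrict_Iic hr, restrict_Ioo_restrict_Ici hr]
    exact h r hr

theorem setLIntegral_Ioo_mul_sq_setLIntegral_Ioo_right_le (hK : K ≠ ∞) (hu : Measurable u)
    (hw : Measurable w) (hg : Measurable g) (hu₀ : ∀ t ∈ Ioo a b, u t ≠ 0)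
    (hu' : ∀ t ∈ Ioo a b, u t ≠ ∞)
    (h : ∀ r ∈ Ioo a b, (∫⁻ s in Ioo a r, w s) * ∫⁻ s in Ioo r b, (u s)⁻¹ ≤ K) :
    ∫⁻ r in Ioo a b, w r * (∫⁻ t in Ioo r b, g t) ^ 2 ≤ 4 * K * ∫⁻ t in Ioo a b, u t * g t ^ 2 := by
  have hae {p : ℝ → Prop} (hp : ∀ t ∈ Ioo a b, p t) : ∀ᵐ t ∂volume.restrict (Ioo a b), p t :=
    (ae_restrict_mem measurableSet_Ioo).mono hp
  refine le_of_eq_of_le (setLIntegral_congr_fun measurableSet_Ioo fun r hr => ?_)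
    (lintegral_mul_sq_setLIntegral_Ici_le hK hu hw (hae hu₀) (hae hu') (hae fun r hr => ?_) hg)
  · rw [restrict_Ioo_restrict_Ici hr]
  · rw [restrict_Ioo_restrict_Iic hr, restrict_Ioo_restrict_Ici hr]
    exact h r hr

end Interval

section Kernel

open scoped ENNReal

lemma sq_add_le_two_mul (a b : ℝ≥0∞) : (a + b) ^ 2 ≤ 2 * (a ^ 2 + b ^ 2) := by
  have := ENNReal.rpow_add_le_mul_rpow_add_rpow a b one_le_two
  norm_num at this
  exact_mod_cast this

variable {g w : ℝ → ℝ≥0∞}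

lemma rpow_half_setLIntegral_sq_mul_inv_sq_enorm_one_sub_le (c : ℝ≥0∞) {t r : ℝ}
    (ht : t ∈ Ioo 0 1) (hr : r ∈ Ioo 0 1) :
    (∫⁻ θ in Ioo (-π) π, (c * (‖1 - t * circleMap 0 r θ‖ₑ ^ 2)⁻¹) ^ 2) ^ (1 / 2 : ℝ) ≤
      ENNReal.ofReal (2 * π) ^ (1 / 2 : ℝ) *
        (c * (ENNReal.ofReal (1 - t * r) ^ (3 / 2 : ℝ))⁻¹) := by
  have hnorm : ‖((t * r : ℝ) : ℂ)‖ = t * r :=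
    Complex.norm_of_nonneg (mul_nonneg ht.1.le hr.1.le)
  have hcircle (θ : ℝ) : t * circleMap 0 r θ = (t * r : ℝ) * circleMap 0 1 θ := by
    simp [circleMap_zero, mul_assoc]
  have hkernel := setLIntegral_inv_pow_four_enorm_one_sub_mul_circleMap_le
    (a := (t * r : ℝ)) (by rw [hnorm]; nlinarith [ht.1, ht.2, hr.1, hr.2])
  rw [hnorm] at hkernel
  calc (∫⁻ θ in Ioo (-π) π, (c * (‖1 - t * circleMap 0 r θ‖ₑ ^ 2)⁻¹) ^ 2) ^ (1 / 2 : ℝ)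
      = (c ^ 2 * ∫⁻ θ in Ioo (-π) π,
          (‖1 - (t * r : ℝ) * circleMap 0 1 θ‖ₑ ^ 4)⁻¹) ^ (1 / 2 : ℝ) := by
        rw [← lintegral_const_mul _ (by fun_prop)]
        simp only [mul_pow, hcircle, ← ENNReal.inv_pow, ← pow_mul, Nat.reduceMul]
    _ ≤ (c ^ 2 * (ENNReal.ofReal (2 * π) *
          (ENNReal.ofReal (1 - t * r) ^ 3)⁻¹)) ^ (1 / 2 : ℝ) := by gcongr
    _ = _ := by
        rw [mul_left_comm, ENNReal.mul_rpow_of_nonneg _ _ (by norm_num),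
          ENNReal.mul_rpow_of_nonneg _ _ (by norm_num), ENNReal.inv_rpow,
          ← ENNReal.rpow_natCast_mul, ← ENNReal.rpow_natCast_mul]
        norm_num

lemma setLIntegral_sq_setLIntegral_inv_sq_enorm_one_sub_le (hg : Measurable g) {r : ℝ}
    (hr : r ∈ Ioo 0 1) :
    ∫⁻ θ in Ioo (-π) π,
        (∫⁻ t : ℝ in Ioo 0 1, g t * (‖1 - t * circleMap 0 r θ‖ₑ ^ 2)⁻¹) ^ 2 ≤
      ENNReal.ofReal (2 * π) *
        (∫⁻ t in Ioo 0 1, g t * (ENNReal.ofReal (1 - t * r) ^ (3 / 2 : ℝ))⁻¹) ^ 2 := by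
  have hmeas : Measurable (Function.uncurry fun t θ : ℝ =>
      g t * (‖1 - t * circleMap 0 r θ‖ₑ ^ 2)⁻¹) := by
    simp only [Function.uncurry_def]
    fun_prop
  calc _ ≤ (∫⁻ t in Ioo 0 1, (∫⁻ θ in Ioo (-π) π,
          (g t * (‖1 - t * circleMap 0 r θ‖ₑ ^ 2)⁻¹) ^ 2) ^ (1 / 2 : ℝ)) ^ 2 :=
        lintegral_sq_lintegral_le_sq_lintegral hmeas
    _ ≤ (∫⁻ t in Ioo 0 1, ENNReal.ofReal (2 * π) ^ (1 / 2 : ℝ) *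
          (g t * (ENNReal.ofReal (1 - t * r) ^ (3 / 2 : ℝ))⁻¹)) ^ 2 := by
        gcongr ?_ ^ 2
        exact setLIntegral_mono' measurableSet_Ioo fun t ht =>
          rpow_half_setLIntegral_sq_mul_inv_sq_enorm_one_sub_le (g t) ht hr
    _ = _ := by
        rw [lintegral_const_mul' _ _ (by finiteness), mul_pow, ← ENNReal.rpow_mul_natCast]
        norm_num

lemma setLIntegral_ball_sq_setLIntegral_le (hg : Measurable g) (hw : Measurable w) :
    ∫⁻ z in Metric.ball (0 : ℂ) 1,
        (∫⁻ t : ℝ in Ioo 0 1, g t * (‖1 - t * z‖ₑ ^ 2)⁻¹) ^ 2 * w ‖z‖ ≤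
      ENNReal.ofReal (2 * π) * ∫⁻ r in Ioo 0 1, w r *
        (∫⁻ t in Ioo 0 1, g t * (ENNReal.ofReal (1 - t * r) ^ (3 / 2 : ℝ))⁻¹) ^ 2 := by
  have hmeas : Measurable fun z : ℂ => ∫⁻ t : ℝ in Ioo 0 1, g t * (‖1 - t * z‖ₑ ^ 2)⁻¹ :=
    Measurable.lintegral_prod_right' (f := fun p : ℂ × ℝ => g p.2 * (‖1 - p.2 * p.1‖ₑ ^ 2)⁻¹)
      (by fun_prop)
  rw [setLIntegral_ball_zero_eq_polar (by fun_prop), ← lintegral_const_mul' _ _ (by finiteness)]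
  refine setLIntegral_mono' measurableSet_Ioo fun r hr => ?_
  calc _ ≤ ∫⁻ θ in Ioo (-π) π, w r *
          (∫⁻ t : ℝ in Ioo 0 1, g t * (‖1 - t * circleMap 0 r θ‖ₑ ^ 2)⁻¹) ^ 2 := by
        refine lintegral_mono fun θ => ?_
        rw [norm_circleMap_zero, abs_of_pos hr.1, mul_comm _ (w r)]
        exact mul_le_of_le_one_left' (by simpa using hr.2.le)
    _ = w r * ∫⁻ θ in Ioo (-π) π,
          (∫⁻ t : ℝ in Ioo 0 1, g t * (‖1 - t * circleMap 0 r θ‖ₑ ^ 2)⁻¹) ^ 2 :=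
        lintegral_const_mul _ ((hmeas.comp (continuous_circleMap 0 r).measurable).pow_const 2)
    _ ≤ w r * (ENNReal.ofReal (2 * π) * (∫⁻ t in Ioo 0 1,
          g t * (ENNReal.ofReal (1 - t * r) ^ (3 / 2 : ℝ))⁻¹) ^ 2) := by
        gcongr
        exact setLIntegral_sq_setLIntegral_inv_sq_enorm_one_sub_le hg hr
    _ = _ := by ring

lemma setLIntegral_mul_inv_rpow_ofReal_one_sub_mul_le (hg : Measurable g) {r : ℝ}
    (hr : r ∈ Ioo 0 1) :
    ∫⁻ t in Ioo 0 1, g t * (ENNReal.ofReal (1 - t * r) ^ (3 / 2 : ℝ))⁻¹ ≤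
      (∫⁻ t in Ioo 0 r, g t * (ENNReal.ofReal (1 - t) ^ (3 / 2 : ℝ))⁻¹) +
        (ENNReal.ofReal (1 - r) ^ (3 / 2 : ℝ))⁻¹ * ∫⁻ t in Ioo r 1, g t := by
  rw [← lintegral_const_mul _ hg, ← Ioo_union_Ico_eq_Ioo hr.1 hr.2.le,
    Measure.restrict_congr_set (Ioo_ae_eq_Ico (a := r))]
  refine (lintegral_union_le _ _ _).trans (add_le_add ?_ ?_)
  · refine setLIntegral_mono' measurableSet_Ioo fun t ht => ?_
    gcongr
    exact mul_le_of_le_one_right ht.1.le hr.2.le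
  · refine setLIntegral_mono' measurableSet_Ico fun t ht => ?_
    rw [mul_comm]
    gcongr
    exact mul_le_of_le_one_left hr.1.le ht.2.le

end Kernel

section Muckenhoupt

open scoped ENNReal

variable {v : ℝ → ℝ} {r : ℝ}

lemma sq_rpow_half_mul_rpow_half (a b : ℝ≥0∞) :
    (a ^ (1 / 2 : ℝ) * b ^ (1 / 2 : ℝ)) ^ 2 = a * b := by
  rw [mul_pow, ← ENNReal.rpow_mul_natCast, ← ENNReal.rpow_mul_natCast]
  norm_num

lemma mul_le_sq_M1v (hr : r ∈ Ioo 0 1) :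
    (∫⁻ s in Ioo r 1, ENNReal.ofReal (hatw v s / (1 - s) ^ 2)) *
      ∫⁻ s in Ioo 0 r, ENNReal.ofReal (1 / hatw v s) ≤ M1v v ^ 2 := by
  rw [← sq_rpow_half_mul_rpow_half]
  gcongr
  exact le_iSup₂_of_le r hr le_rfl

lemma mul_le_sq_M2v (hr : r ∈ Ioo 0 1) :
    (∫⁻ s in Ioo 0 r, ENNReal.ofReal (hatw v s / (1 - s) ^ 4)) *
      ∫⁻ s in Ioo r 1, ENNReal.ofReal ((1 - s) ^ 2 / hatw v s) ≤ M2v v ^ 2 := by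
  rw [← sq_rpow_half_mul_rpow_half]
  gcongr
  exact le_iSup₂_of_le r hr le_rfl

lemma setLIntegral_ofReal_pos {f : ℝ → ℝ} {a b : ℝ} (hab : a < b) (hf : Measurable f)
    (hpos : ∀ s ∈ Ioo a b, 0 < f s) : 0 < ∫⁻ s in Ioo a b, ENNReal.ofReal (f s) := by
  rw [setLIntegral_pos_iff hf.ennreal_ofReal]
  refine lt_of_lt_of_le ?_ (measure_mono (s := Ioo a b) fun s hs => ⟨?_, hs⟩)
  · simpa using hab
  · simpa using hpos s hs

lemma inv_pow_three_ofReal_one_sub {s : ℝ} (hs : s ∈ Ico 0 1) :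
    (ENNReal.ofReal (1 - s) ^ 3)⁻¹ = 1 + ∫⁻ x in Ioo 0 s, ENNReal.ofReal (3 / (1 - x) ^ 4) := by
  have hpos {x : ℝ} (hx : x ∈ Icc 0 s) : 0 < 1 - x := by linarith [hx.2, hs.2]
  have hderiv : ∀ x ∈ uIcc 0 s,
      HasDerivAt (fun x : ℝ => ((1 - x) ^ 3)⁻¹) (3 / (1 - x) ^ 4) x := by
    intro x hx
    have hx := hpos (by rwa [uIcc_of_le hs.1] at hx)
    refine ((((hasDerivAt_id x).const_sub 1).pow 3).inv (by simp [hx.ne'])).congr_deriv ?_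
    simp only [id, Nat.cast_ofNat, Nat.reduceSub, Pi.pow_apply]
    field_simp
  have hcont : ContinuousOn (fun x : ℝ => 3 / (1 - x) ^ 4) (Icc 0 s) :=
    continuousOn_const.div (by fun_prop) fun x hx => (pow_pos (hpos hx) 4).ne'
  have hint := intervalIntegral.integral_eq_sub_of_hasDerivAt hderiv
    (hcont.intervalIntegrable_of_Icc hs.1)
  rw [intervalIntegral.integral_of_le hs.1, integral_Ioc_eq_integral_Ioo] at hint
  have hnonneg : 0 ≤ ∫ x in Ioo 0 s, 3 / (1 - x) ^ 4 :=
    setIntegral_nonneg measurableSet_Ioo fun x _ => by positivity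
  rw [← ofReal_integral_eq_lintegral_ofReal (hcont.integrableOn_Icc.mono_set Ioo_subset_Icc_self)
      (ae_of_all _ fun x => by positivity), ← ENNReal.ofReal_one,
    ← ENNReal.ofReal_add zero_le_one hnonneg, hint, ← ENNReal.ofReal_pow (by linarith [hs.2]),
    ← ENNReal.ofReal_inv_of_pos (pow_pos (by linarith [hs.2]) 3)]
  norm_num

namespace RadialWeight

lemma M1v_ne_zero (hv : RadialWeight v) : M1v v ≠ 0 := by
  have hm := measurable_hatw hv.1
  intro h
  have hle := mul_le_sq_M1v (v := v) (r := 1 / 2) (by norm_num)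
  rw [h, zero_pow two_ne_zero] at hle
  refine hle.not_gt (ENNReal.mul_pos (setLIntegral_ofReal_pos (by norm_num) (by fun_prop) ?_).ne'
    (setLIntegral_ofReal_pos (by norm_num) (by fun_prop) ?_).ne') <;>
  · intro s hs
    have := hv.hatw_pos (r := s) ⟨by linarith [hs.1], by linarith [hs.2]⟩
    have : 0 < 1 - s := by linarith [hs.2]
    positivity

lemma M2v_ne_zero (hv : RadialWeight v) : M2v v ≠ 0 := by
  have hm := measurable_hatw hv.1
  intro h
  have hle := mul_le_sq_M2v (v := v) (r := 1 / 2) (by norm_num)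
  rw [h, zero_pow two_ne_zero] at hle
  refine hle.not_gt (ENNReal.mul_pos (setLIntegral_ofReal_pos (by norm_num) (by fun_prop) ?_).ne'
    (setLIntegral_ofReal_pos (by norm_num) (by fun_prop) ?_).ne') <;>
  · intro s hs
    have := hv.hatw_pos (r := s) ⟨by linarith [hs.1], by linarith [hs.2]⟩
    have : 0 < 1 - s := by linarith [hs.2]
    positivity

lemma ofReal_hatw_div_one_sub_le (hv : RadialWeight v) {D : ℝ} (hr : r ∈ Ico 0 1)
    (hD : hatw v r ≤ D * hatw v ((1 + r) / 2)) :
    ENNReal.ofReal (hatw v r / (1 - r)) ≤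
      ENNReal.ofReal (2 * D) * ∫⁻ s in Ioo r 1, ENNReal.ofReal (hatw v s / (1 - s) ^ 2) := by
  have hr₁ : 0 < 1 - r := sub_pos.2 hr.2
  have hmid : (1 + r) / 2 ∈ Ico 0 1 := ⟨by linarith [hr.1], by linarith⟩
  have hpos := hv.hatw_pos hmid
  have hDpos : 0 < D := pos_of_mul_pos_left ((hv.hatw_pos hr).trans_le hD) hpos.le
  calc ENNReal.ofReal (hatw v r / (1 - r))
      ≤ ENNReal.ofReal (2 * D) * ENNReal.ofReal (hatw v ((1 + r) / 2) / (1 - r) ^ 2) *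
          ENNReal.ofReal ((1 + r) / 2 - r) := by
        rw [← ENNReal.ofReal_mul (by positivity), ← ENNReal.ofReal_mul (by positivity)]
        gcongr
        calc hatw v r / (1 - r) ≤ D * hatw v ((1 + r) / 2) / (1 - r) := by gcongr
          _ = _ := by field_simp; ring
    _ = ENNReal.ofReal (2 * D) * ∫⁻ _ in Ioo r ((1 + r) / 2),
          ENNReal.ofReal (hatw v ((1 + r) / 2) / (1 - r) ^ 2) := by
        rw [setLIntegral_const, Real.volume_Ioo, mul_assoc]
    _ ≤ ENNReal.ofReal (2 * D) * ∫⁻ s in Ioo r ((1 + r) / 2),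
          ENNReal.ofReal (hatw v s / (1 - s) ^ 2) := by
        gcongr ENNReal.ofReal (2 * D) * ?_
        refine setLIntegral_mono' measurableSet_Ioo fun s hs => ?_
        have hs' : s ∈ Ico 0 1 := ⟨hr.1.trans hs.1.le, hs.2.trans hmid.2⟩
        have hle := hv.antitoneOn_hatw hs' hmid hs.2.le
        have : 0 < 1 - s := sub_pos.2 hs'.2
        gcongr
        exacts [hv.hatw_pos hs' |>.le, hs.1.le]
    _ ≤ _ := by
        gcongr
        exact hmid.2.le

lemma setLIntegral_mul_setLIntegral_inv_le_sq_M1v (hv : RadialWeight v) {D : ℝ} (hr : r ∈ Ioo 0 1)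
    (hD : hatw v r ≤ D * hatw v ((1 + r) / 2)) :
    (∫⁻ s in Ioo r 1, ENNReal.ofReal (v s)) *
        ∫⁻ s in Ioo 0 r, (ENNReal.ofReal (hatw v s * (1 - s)))⁻¹ ≤
      ENNReal.ofReal (2 * D) * M1v v ^ 2 := by
  have hr₁ : 0 < 1 - r := sub_pos.2 hr.2
  have hinv : ∫⁻ s in Ioo 0 r, (ENNReal.ofReal (hatw v s * (1 - s)))⁻¹ ≤
      ENNReal.ofReal (1 - r)⁻¹ * ∫⁻ s in Ioo 0 r, ENNReal.ofReal (1 / hatw v s) := by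
    rw [← lintegral_const_mul' _ _ ENNReal.ofReal_ne_top]
    refine setLIntegral_mono' measurableSet_Ioo fun s hs => ?_
    have hs₁ : 0 < 1 - s := by linarith [hs.2]
    have hpos := hv.hatw_pos ⟨hs.1.le, hs.2.trans hr.2⟩
    rw [← ENNReal.ofReal_mul (by positivity), ← ENNReal.ofReal_inv_of_pos (by positivity), mul_inv,
      mul_comm, one_div]
    gcongr
    exact hs.2.le
  calc (∫⁻ s in Ioo r 1, ENNReal.ofReal (v s)) *
        ∫⁻ s in Ioo 0 r, (ENNReal.ofReal (hatw v s * (1 - s)))⁻¹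
      ≤ ENNReal.ofReal (hatw v r / (1 - r)) *
          ∫⁻ s in Ioo 0 r, ENNReal.ofReal (1 / hatw v s) := by
        rw [hv.lintegral_eq_hatw (Ioo_subset_Ico_self hr), div_eq_mul_inv,
          ENNReal.ofReal_mul (hv.hatw_pos (Ioo_subset_Ico_self hr)).le, mul_assoc]
        gcongr
    _ ≤ _ := by
        grw [hv.ofReal_hatw_div_one_sub_le (Ioo_subset_Ico_self hr) hD, mul_assoc,
          mul_le_sq_M1v hr]

-- Writing `(1 - s)⁻³` as an integral lets Tonelli's theorem replace the weight `v` by `v̂`.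
lemma setLIntegral_mul_inv_pow_three_le (hv : RadialWeight v) (hr : r ∈ Ioo 0 1) :
    ∫⁻ s in Ioo 0 r, ENNReal.ofReal (v s) * (ENNReal.ofReal (1 - s) ^ 3)⁻¹ ≤
      ENNReal.ofReal (hatw v 0) + 3 * ∫⁻ s in Ioo 0 r, ENNReal.ofReal (hatw v s / (1 - s) ^ 4) := by
  have hvm := hv.1
  calc ∫⁻ s in Ioo 0 r, ENNReal.ofReal (v s) * (ENNReal.ofReal (1 - s) ^ 3)⁻¹
      = (∫⁻ s in Ioo 0 r, ENNReal.ofReal (v s)) + ∫⁻ s in Ioo 0 r, ENNReal.ofReal (v s) *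
          ∫⁻ x in Ioo 0 s, ENNReal.ofReal (3 / (1 - x) ^ 4) := by
        rw [← lintegral_add_left (by fun_prop)]
        refine setLIntegral_congr_fun measurableSet_Ioo fun s hs => ?_
        rw [inv_pow_three_ofReal_one_sub ⟨hs.1.le, hs.2.trans hr.2⟩, mul_one_add]
    _ = (∫⁻ s in Ioo 0 r, ENNReal.ofReal (v s)) + ∫⁻ x in Ioo 0 r,
          ENNReal.ofReal (3 / (1 - x) ^ 4) * ∫⁻ s in Ioo x r, ENNReal.ofReal (v s) := by
        rw [setLIntegral_Ioo_mul_setLIntegral_Ioo (by fun_prop) (by fun_prop)]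
    _ ≤ ENNReal.ofReal (hatw v 0) + ∫⁻ x in Ioo 0 r,
          3 * ENNReal.ofReal (hatw v x / (1 - x) ^ 4) := by
        refine add_le_add ?_ (setLIntegral_mono' measurableSet_Ioo fun x hx => ?_)
        · rw [← hv.lintegral_eq_hatw (by simp)]
          exact lintegral_mono_set (Ioo_subset_Ioo_right hr.2.le)
        · have hx' : x ∈ Ico 0 1 := ⟨hx.1.le, hx.2.trans hr.2⟩
          calc _ ≤ ENNReal.ofReal (3 / (1 - x) ^ 4) * ENNReal.ofReal (hatw v x) := by
                rw [← hv.lintegral_eq_hatw hx']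
                gcongr
                exact hr.2.le
            _ = ENNReal.ofReal 3 * ENNReal.ofReal (hatw v x / (1 - x) ^ 4) := by
                rw [← ENNReal.ofReal_mul (by positivity), ← ENNReal.ofReal_mul (by positivity)]
                ring_nf
            _ = _ := by simp
    _ = _ := by rw [lintegral_const_mul' _ _ (by simp)]

lemma setLIntegral_mul_setLIntegral_inv_le_sq_M2v (hv : RadialWeight v) (hr : r ∈ Ioo 0 1) :
    (∫⁻ s in Ioo 0 r, ENNReal.ofReal (v s) * (ENNReal.ofReal (1 - s) ^ 3)⁻¹) *
        ∫⁻ s in Ioo r 1, (ENNReal.ofReal (hatw v s / (1 - s) ^ 2))⁻¹ ≤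
      ENNReal.ofReal (hatw v 0) * (∫⁻ s in Ioo 0 1, ENNReal.ofReal ((1 - s) ^ 2 / hatw v s)) +
        3 * M2v v ^ 2 := by
  have hinv : ∫⁻ s in Ioo r 1, (ENNReal.ofReal (hatw v s / (1 - s) ^ 2))⁻¹ =
      ∫⁻ s in Ioo r 1, ENNReal.ofReal ((1 - s) ^ 2 / hatw v s) := by
    refine setLIntegral_congr_fun measurableSet_Ioo fun s hs => ?_
    have hs₁ : 0 < 1 - s := sub_pos.2 hs.2
    have hpos := hv.hatw_pos ⟨hr.1.le.trans hs.1.le, hs.2⟩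
    rw [← ENNReal.ofReal_inv_of_pos (by positivity), inv_div]
  rw [hinv]
  grw [hv.setLIntegral_mul_inv_pow_three_le hr, add_mul, mul_assoc, mul_le_sq_M2v hr]
  gcongr
  exact hr.1.le

lemma sq_setLIntegral_le (hv : RadialWeight v) {g : ℝ → ℝ≥0∞} (hg : Measurable g) :
    (∫⁻ t in Ioo 0 1, g t) ^ 2 ≤ (∫⁻ s in Ioo 0 1, ENNReal.ofReal ((1 - s) ^ 2 / hatw v s)) *
      ∫⁻ t in Ioo 0 1, g t ^ 2 * ENNReal.ofReal (hatw v t / (1 - t) ^ 2) := by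
  have hm := measurable_hatw hv.1
  refine sq_lintegral_le_mul_of_sq_le_mul (by fun_prop) (by fun_prop) ?_
  filter_upwards [ae_restrict_mem measurableSet_Ioo] with t ht
  have hpos := hv.hatw_pos (Ioo_subset_Ico_self ht)
  have ht₁ : 0 < 1 - t := sub_pos.2 ht.2
  rw [mul_left_comm, ← ENNReal.ofReal_mul (by positivity), div_mul_div_cancel₀ hpos.ne',
    div_self (by positivity), ENNReal.ofReal_one, mul_one]

end RadialWeight

end Muckenhoupt

section Hilbert

open scoped ENNReal

lemma one_sub_le_norm_one_sub_ofReal_mul {t ρ : ℝ} {z : ℂ} (ht : t ∈ Ioo 0 1) (hz : ‖z‖ ≤ ρ) :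
    1 - ρ ≤ ‖1 - t * z‖ := by
  have hle : ‖t * z‖ ≤ ‖z‖ := by
    rw [norm_mul, Complex.norm_real, norm_of_nonneg ht.1.le]
    exact mul_le_of_le_one_left (norm_nonneg z) ht.2.le
  have := norm_sub_norm_le 1 (t * z)
  rw [norm_one] at this
  linarith

lemma hasDerivAt_Hop {φ : ℝ → ℂ} (hφ : IntegrableOn φ (Ioo 0 1)) {z : ℂ}
    (hz : z ∈ Metric.ball 0 1) :
    HasDerivAt (Hop φ) (∫ t in Ioo (0 : ℝ) 1, φ t * (t / (1 - t * z) ^ 2)) z := by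
  obtain ⟨ρ, hzρ, hρ⟩ := exists_between (mem_ball_zero_iff.1 hz)
  have hρ₀ : 0 < 1 - ρ := sub_pos.2 hρ
  have hball : Metric.ball (0 : ℂ) ρ ∈ nhds z := Metric.isOpen_ball.mem_nhds (by simpa using hzρ)
  have hlower {t : ℝ} (ht : t ∈ Ioo 0 1) {x : ℂ} (hx : x ∈ Metric.ball 0 ρ) :
      1 - ρ ≤ ‖1 - t * x‖ :=
    one_sub_le_norm_one_sub_ofReal_mul ht (mem_ball_zero_iff.1 hx).le
  have hmeas (x : ℂ) : AEStronglyMeasurable (fun t : ℝ => φ t / (1 - t * x))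
      (volume.restrict (Ioo 0 1)) :=
    hφ.aestronglyMeasurable.div₀ (Measurable.aestronglyMeasurable (by fun_prop))
  refine (hasDerivAt_integral_of_dominated_loc_of_deriv_le
    (F' := fun x t => φ t * (t / (1 - t * x) ^ 2)) (bound := fun t => ‖φ t‖ * (1 / (1 - ρ) ^ 2))
    hball (Eventually.of_forall hmeas) ?_ ?_ ?_ (hφ.norm.mul_const _) ?_).2
  · refine (hφ.norm.mul_const (1 - ρ)⁻¹).mono' (hmeas z) ?_
    filter_upwards [ae_restrict_mem measurableSet_Ioo] with t ht
    rw [norm_div, div_eq_mul_inv]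
    gcongr
    exact one_sub_le_norm_one_sub_ofReal_mul ht hzρ.le
  · exact hφ.aestronglyMeasurable.mul (Measurable.aestronglyMeasurable (by fun_prop))
  · filter_upwards [ae_restrict_mem measurableSet_Ioo] with t ht x hx
    rw [norm_mul, norm_div, norm_pow, Complex.norm_real, norm_of_nonneg ht.1.le]
    have := hlower ht hx
    gcongr
    exact ht.2.le
  · filter_upwards [ae_restrict_mem measurableSet_Ioo] with t ht x hx
    have hne : (1 : ℂ) - t * x ≠ 0 := norm_pos_iff.1 (hρ₀.trans_le (hlower ht hx))
    have hlin : HasDerivAt (fun x : ℂ => 1 - t * x) (-t) x := by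
      simpa using ((hasDerivAt_id x).const_mul (t : ℂ)).const_sub 1
    exact ((hlin.inv hne).const_mul (φ t)).congr_deriv (by ring)

lemma enorm_deriv_Hop_le {φ : ℝ → ℂ} (hφ : IntegrableOn φ (Ioo 0 1)) {z : ℂ}
    (hz : z ∈ Metric.ball 0 1) :
    ‖deriv (Hop φ) z‖ₑ ≤ ∫⁻ t : ℝ in Ioo 0 1, ‖φ t‖ₑ * (‖1 - t * z‖ₑ ^ 2)⁻¹ := by
  rw [(hasDerivAt_Hop hφ hz).deriv]
  refine (enorm_integral_le_lintegral_enorm _).trans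
    (setLIntegral_mono' measurableSet_Ioo fun t ht => ?_)
  have hne : (1 : ℂ) - t * z ≠ 0 := norm_pos_iff.1
    ((sub_pos.2 (mem_ball_zero_iff.1 hz)).trans_le (one_sub_le_norm_one_sub_ofReal_mul ht le_rfl))
  have ht₁ : ‖(t : ℂ)‖ₑ ≤ 1 := by
    simpa [← ofReal_norm, abs_of_pos ht.1] using ht.2.le
  rw [div_eq_mul_inv, enorm_mul, enorm_mul, enorm_inv (pow_ne_zero 2 hne), enorm_pow]
  gcongr
  exact mul_le_of_le_one_left' ht₁

lemma enorm_Hop_zero_le (φ : ℝ → ℂ) : ‖Hop φ 0‖ₑ ≤ ∫⁻ t in Ioo 0 1, ‖φ t‖ₑ := by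
  simpa [Hop] using enorm_integral_le_lintegral_enorm (μ := volume.restrict (Ioo 0 1)) φ

namespace RadialWeight

variable {v : ℝ → ℝ}

lemma setLIntegral_mul_sq_setLIntegral_left_le (hv : RadialWeight v) {D : ℝ}
    (hD : ∀ r ∈ Ico 0 1, hatw v r ≤ D * hatw v ((1 + r) / 2)) (hM : M1v v ≠ ∞) {g : ℝ → ℝ≥0∞}
    (hg : Measurable g) :
    ∫⁻ r in Ioo 0 1, ENNReal.ofReal (v r) *
        (∫⁻ t in Ioo 0 r, g t * (ENNReal.ofReal (1 - t) ^ (3 / 2 : ℝ))⁻¹) ^ 2 ≤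
      4 * (ENNReal.ofReal (2 * D) * M1v v ^ 2) *
        ∫⁻ t in Ioo 0 1, g t ^ 2 * ENNReal.ofReal (hatw v t / (1 - t) ^ 2) := by
  have hvm := hv.1
  have hm := measurable_hatw hv.1
  have hpos {t : ℝ} (ht : t ∈ Ioo 0 1) : 0 < hatw v t * (1 - t) :=
    mul_pos (hv.hatw_pos (Ioo_subset_Ico_self ht)) (sub_pos.2 ht.2)
  refine (setLIntegral_Ioo_mul_sq_setLIntegral_Ioo_left_le
    (u := fun t => ENNReal.ofReal (hatw v t * (1 - t))) (by finiteness) (by fun_prop)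
    (by fun_prop) (by fun_prop) (fun t ht => by simpa using hpos ht) (by simp) fun r hr =>
      hv.setLIntegral_mul_setLIntegral_inv_le_sq_M1v hr (hD r (Ioo_subset_Ico_self hr))).trans_eq ?_
  congr 1
  refine setLIntegral_congr_fun measurableSet_Ioo fun t ht => ?_
  have ht₁ : 0 < 1 - t := sub_pos.2 ht.2
  have hcube : (ENNReal.ofReal (1 - t) ^ (3 / 2 : ℝ)) ^ 2 = ENNReal.ofReal ((1 - t) ^ 3) := by
    rw [← ENNReal.rpow_mul_natCast, ENNReal.ofReal_pow ht₁.le, ← ENNReal.rpow_natCast]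
    norm_num
  rw [mul_pow, ← ENNReal.inv_pow, hcube, mul_left_comm,
    ← ENNReal.ofReal_inv_of_pos (by positivity), ← ENNReal.ofReal_mul (hpos ht).le]
  congr 2
  field_simp

lemma setLIntegral_mul_sq_setLIntegral_right_le (hv : RadialWeight v)
    (hU : ∫⁻ s in Ioo 0 1, ENNReal.ofReal ((1 - s) ^ 2 / hatw v s) ≠ ∞) (hM : M2v v ≠ ∞)
    {g : ℝ → ℝ≥0∞} (hg : Measurable g) :
    ∫⁻ r in Ioo 0 1, ENNReal.ofReal (v r) * (ENNReal.ofReal (1 - r) ^ 3)⁻¹ *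
        (∫⁻ t in Ioo r 1, g t) ^ 2 ≤
      4 * (ENNReal.ofReal (hatw v 0) * (∫⁻ s in Ioo 0 1, ENNReal.ofReal ((1 - s) ^ 2 / hatw v s)) +
          3 * M2v v ^ 2) *
        ∫⁻ t in Ioo 0 1, g t ^ 2 * ENNReal.ofReal (hatw v t / (1 - t) ^ 2) := by
  have hvm := hv.1
  have hm := measurable_hatw hv.1
  have hpos {t : ℝ} (ht : t ∈ Ioo 0 1) : 0 < hatw v t / (1 - t) ^ 2 :=
    div_pos (hv.hatw_pos (Ioo_subset_Ico_self ht)) (pow_pos (sub_pos.2 ht.2) 2)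
  simp_rw [mul_comm (g _ ^ 2)]
  exact setLIntegral_Ioo_mul_sq_setLIntegral_Ioo_right_le (by finiteness) (by fun_prop)
    (by fun_prop) hg (fun t ht => by simpa using hpos ht) (by simp)
    fun r hr => hv.setLIntegral_mul_setLIntegral_inv_le_sq_M2v hr

/-- The constant produced by the two weighted Hardy inequalities, which bound the average over
`t < r` by `M₁(v)` and the one over `t > r` by `M₂(v)`; here `D` is a doubling constant of `v̂`. -/
def hardyConst (v : ℝ → ℝ) (D : ℝ) : ℝ≥0∞ :=
  ENNReal.ofReal (2 * D) * M1v v ^ 2 + (ENNReal.ofReal (hatw v 0) *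
    (∫⁻ s in Ioo 0 1, ENNReal.ofReal ((1 - s) ^ 2 / hatw v s)) + 3 * M2v v ^ 2)

lemma hardyConst_ne_top {D : ℝ}
    (hU : ∫⁻ s in Ioo 0 1, ENNReal.ofReal ((1 - s) ^ 2 / hatw v s) ≠ ∞)
    (hM₁ : M1v v ≠ ∞) (hM₂ : M2v v ≠ ∞) : hardyConst v D ≠ ∞ := by
  rw [hardyConst]
  finiteness

lemma setLIntegral_mul_sq_setLIntegral_inv_rpow_le (hv : RadialWeight v) {D : ℝ}
    (hD : ∀ r ∈ Ico 0 1, hatw v r ≤ D * hatw v ((1 + r) / 2))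
    (hU : ∫⁻ s in Ioo 0 1, ENNReal.ofReal ((1 - s) ^ 2 / hatw v s) ≠ ∞)
    (hM₁ : M1v v ≠ ∞) (hM₂ : M2v v ≠ ∞) {g : ℝ → ℝ≥0∞} (hg : Measurable g) :
    ∫⁻ r in Ioo 0 1, ENNReal.ofReal (v r) *
        (∫⁻ t in Ioo 0 1, g t * (ENNReal.ofReal (1 - t * r) ^ (3 / 2 : ℝ))⁻¹) ^ 2 ≤
      8 * hardyConst v D *
        ∫⁻ t in Ioo 0 1, g t ^ 2 * ENNReal.ofReal (hatw v t / (1 - t) ^ 2) := by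
  have hvm := hv.1
  have hcube (r : ℝ) : ((ENNReal.ofReal (1 - r) ^ (3 / 2 : ℝ))⁻¹) ^ 2 =
      (ENNReal.ofReal (1 - r) ^ 3)⁻¹ := by
    rw [← ENNReal.inv_pow, ← ENNReal.rpow_mul_natCast, ← ENNReal.rpow_natCast]
    norm_num
  have hmeas : Measurable fun r : ℝ =>
      ∫⁻ t in Ioo 0 r, g t * (ENNReal.ofReal (1 - t) ^ (3 / 2 : ℝ))⁻¹ :=
    Monotone.measurable fun _ _ hrr' => lintegral_mono_set (Ioo_subset_Ioo_right hrr')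
  calc ∫⁻ r in Ioo 0 1, ENNReal.ofReal (v r) *
        (∫⁻ t in Ioo 0 1, g t * (ENNReal.ofReal (1 - t * r) ^ (3 / 2 : ℝ))⁻¹) ^ 2
      ≤ ∫⁻ r in Ioo 0 1, 2 * (ENNReal.ofReal (v r) *
            (∫⁻ t in Ioo 0 r, g t * (ENNReal.ofReal (1 - t) ^ (3 / 2 : ℝ))⁻¹) ^ 2 +
          ENNReal.ofReal (v r) * (ENNReal.ofReal (1 - r) ^ 3)⁻¹ *
            (∫⁻ t in Ioo r 1, g t) ^ 2) := by
        refine setLIntegral_mono' measurableSet_Ioo fun r hr => ?_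
        grw [setLIntegral_mul_inv_rpow_ofReal_one_sub_mul_le hg hr, sq_add_le_two_mul, mul_pow,
          hcube]
        exact le_of_eq (by ring)
    _ = 2 * ((∫⁻ r in Ioo 0 1, ENNReal.ofReal (v r) *
            (∫⁻ t in Ioo 0 r, g t * (ENNReal.ofReal (1 - t) ^ (3 / 2 : ℝ))⁻¹) ^ 2) +
          ∫⁻ r in Ioo 0 1, ENNReal.ofReal (v r) * (ENNReal.ofReal (1 - r) ^ 3)⁻¹ *
            (∫⁻ t in Ioo r 1, g t) ^ 2) := by
        rw [lintegral_const_mul' _ _ ENNReal.ofNat_ne_top, lintegral_add_left (by fun_prop)]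
    _ ≤ _ := by
        grw [hv.setLIntegral_mul_sq_setLIntegral_left_le hD hM₁ hg,
          hv.setLIntegral_mul_sq_setLIntegral_right_le hU hM₂ hg]
        exact le_of_eq (by rw [hardyConst]; ring)

lemma integrableOn_of_L2V2sq_lt_top (hv : RadialWeight v)
    (hU : ∫⁻ s in Ioo 0 1, ENNReal.ofReal ((1 - s) ^ 2 / hatw v s) ≠ ∞) {φ : ℝ → ℂ}
    (hφ : Measurable φ) (hφ₂ : L2V2sq v φ < ∞) : IntegrableOn φ (Ioo 0 1) := by
  refine ⟨hφ.aestronglyMeasurable, ?_⟩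
  have hlt := (hv.sq_setLIntegral_le hφ.enorm).trans_lt (ENNReal.mul_lt_top hU.lt_top hφ₂)
  exact (ENNReal.pow_lt_top_iff.1 hlt).resolve_right two_ne_zero

lemma setLIntegral_ball_sq_enorm_deriv_Hop_le (hv : RadialWeight v) {D : ℝ}
    (hD : ∀ r ∈ Ico 0 1, hatw v r ≤ D * hatw v ((1 + r) / 2))
    (hU : ∫⁻ s in Ioo 0 1, ENNReal.ofReal ((1 - s) ^ 2 / hatw v s) ≠ ∞)
    (hM₁ : M1v v ≠ ∞) (hM₂ : M2v v ≠ ∞) {φ : ℝ → ℂ} (hφ : Measurable φ) (hφ₂ : L2V2sq v φ < ∞) :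
    ∫⁻ z in Metric.ball (0 : ℂ) 1, ‖deriv (Hop φ) z‖ₑ ^ 2 * ENNReal.ofReal (v ‖z‖) ≤
      ENNReal.ofReal π * (16 * hardyConst v D * L2V2sq v φ) := by
  have hvm := hv.1
  have hint := hv.integrableOn_of_L2V2sq_lt_top hU hφ hφ₂
  calc ∫⁻ z in Metric.ball (0 : ℂ) 1, ‖deriv (Hop φ) z‖ₑ ^ 2 * ENNReal.ofReal (v ‖z‖)
      ≤ ∫⁻ z in Metric.ball (0 : ℂ) 1,
          (∫⁻ t : ℝ in Ioo 0 1, ‖φ t‖ₑ * (‖1 - t * z‖ₑ ^ 2)⁻¹) ^ 2 * ENNReal.ofReal (v ‖z‖) := by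
        refine setLIntegral_mono' measurableSet_ball fun z hz => ?_
        grw [enorm_deriv_Hop_le hint hz]
    _ ≤ ENNReal.ofReal (2 * π) * (8 * hardyConst v D * L2V2sq v φ) := by
        grw [setLIntegral_ball_sq_setLIntegral_le (w := fun r => ENNReal.ofReal (v r)) hφ.enorm
          (by fun_prop), hv.setLIntegral_mul_sq_setLIntegral_inv_rpow_le hD hU hM₁ hM₂ hφ.enorm]
        rfl
    _ = _ := by
        rw [ENNReal.ofReal_mul zero_le_two, ENNReal.ofReal_ofNat]
        ring

theorem DvSq_Hop_le (hv : RadialWeight v) {D : ℝ}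
    (hD : ∀ r ∈ Ico 0 1, hatw v r ≤ D * hatw v ((1 + r) / 2))
    (hU : ∫⁻ s in Ioo 0 1, ENNReal.ofReal ((1 - s) ^ 2 / hatw v s) ≠ ∞)
    (hM₁ : M1v v ≠ ∞) (hM₂ : M2v v ≠ ∞) {φ : ℝ → ℂ} (hφ : Measurable φ) (hφ₂ : L2V2sq v φ < ∞) :
    DvSq v (Hop φ) ≤ ((∫⁻ s in Ioo 0 1, ENNReal.ofReal ((1 - s) ^ 2 / hatw v s)) +
      16 * hardyConst v D) * L2V2sq v φ := by
  rw [DvSq, add_mul, ← ENNReal.div_eq_inv_mul]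
  refine add_le_add ?_ (ENNReal.div_le_of_le_mul'
    (hv.setLIntegral_ball_sq_enorm_deriv_Hop_le hD hU hM₁ hM₂ hφ hφ₂))
  grw [← enorm_eq_nnnorm, enorm_Hop_zero_le]
  exact hv.sq_setLIntegral_le hφ.enorm

end RadialWeight

lemma exists_pos_le_ofReal_mul {a b : ℝ≥0∞} (ha : a ≠ ∞) (hb : b ≠ 0) :
    ∃ C : ℝ, 0 < C ∧ a ≤ ENNReal.ofReal C * b := by
  obtain ⟨n, hn, hlt⟩ := ENNReal.exists_nat_pos_mul_gt hb ha
  exact ⟨n, by exact_mod_cast hn, by simpa using hlt.le⟩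

lemma L2V2sq_ofReal_norm (v : ℝ → ℝ) (φ : ℝ → ℂ) :
    L2V2sq v (fun t => (‖φ t‖ : ℂ)) = L2V2sq v φ := by
  simp [L2V2sq]

end Hilbert

/-- (iii)⇒(ii) of Theorem 1.2 with the norm estimate: if `v ∈ D̂` satisfies
`∫_0^1 (1-s)²/v̂(s) ds < ∞`, `M₁(v) < ∞` and `M₂(v) < ∞`, then the sublinear Hilbert operator
`H̃ : L²_{V̂₂} → D_v` is bounded with norm `≲ M₁(v)M₂(v)`. -/
theorem statement4 (v : ℝ → ℝ) (hv : RadialWeight v) (hD : DoublingD v)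
    (hvg2 : ∫⁻ s in Set.Ioo (0:ℝ) 1, ENNReal.ofReal ((1-s)^2 / hatw v s) < ⊤)
    (hM1 : M1v v < ⊤) (hM2 : M2v v < ⊤) :
    ∃ C : ℝ, 0 < C ∧ ∀ φ : ℝ → ℂ, Measurable φ → L2V2sq v φ < ⊤ →
      DifferentiableOn ℂ (Htil φ) (Metric.ball 0 1) ∧
      (DvSq v (Htil φ)) ^ (1/2 : ℝ) ≤
        ENNReal.ofReal C * M1v v * M2v v * (L2V2sq v φ) ^ (1/2 : ℝ) := by
  obtain ⟨D, -, hD⟩ := hD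
  set K := (∫⁻ s in Ioo 0 1, ENNReal.ofReal ((1 - s) ^ 2 / hatw v s)) +
    16 * RadialWeight.hardyConst v D
  have hK : K ≠ ⊤ := ENNReal.add_ne_top.2 ⟨hvg2.ne,
    ENNReal.mul_ne_top ENNReal.ofNat_ne_top (RadialWeight.hardyConst_ne_top hvg2.ne hM1.ne hM2.ne)⟩
  obtain ⟨C, hC, hKC⟩ := exists_pos_le_ofReal_mul
    (ENNReal.rpow_ne_top_of_nonneg one_half_pos.le hK)
    (mul_ne_zero hv.M1v_ne_zero hv.M2v_ne_zero)
  refine ⟨C, hC, fun φ hφ hφ₂ => ?_⟩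
  rw [← L2V2sq_ofReal_norm] at hφ₂ ⊢
  have hnorm : Measurable fun t => (‖φ t‖ : ℂ) := by fun_prop
  have hint := hv.integrableOn_of_L2V2sq_lt_top hvg2.ne hnorm hφ₂
  refine ⟨fun z hz => (hasDerivAt_Hop hint hz).differentiableAt.differentiableWithinAt, ?_⟩
  calc (DvSq v (Htil φ)) ^ (1/2 : ℝ) ≤ (K * L2V2sq v fun t => (‖φ t‖ : ℂ)) ^ (1/2 : ℝ) := by
        gcongr
        exact hv.DvSq_Hop_le hD hvg2.ne hM1.ne hM2.ne hnorm hφ₂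
    _ ≤ _ := by
        grw [ENNReal.mul_rpow_of_nonneg _ _ one_half_pos.le, hKC, ← mul_assoc]

end
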